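/- arXiv:2009.03147 — 2 statements merged into one kernel-verified Lean document; each statement's English description precedes it below -/
import Mathlib

section
/- Let G be a finite set of generators with a distinguished slack generator s ∈ G, let D be a finite set of loads with fixed demands P_D : D → ℝ, and let ε ≥ 0 and ξ ≥ (|G| − 1)·ε. Suppose P : G → ℝ satisfies the power balance P(s) = Σ_{d ∈ D} P_D(d) − Σ_{j ≠ s} P(j) together with the calibrated slack limits Pmin_s + ξ ≤ P(s) ≤ Pmax_s − ξ. Then every P̂ : G → ℝ with P̂(s) = Σ_{d ∈ D} P_D(d) − Σ_{j ≠ s} P̂(j) and |P̂(j) − P(j)| ≤ ε for all j ≠ s satisfies the original slack generation limits Pmin_s ≤ P̂(s) ≤ Pmax_s. -/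
/-!
Subtracting the two power-balance equations cancels the demands, so the slack error is minus the sum
of the `|G| - 1` non-slack errors. By the triangle inequality it is at most `(|G| - 1) * ε ≤ ξ` in
absolute value, which is exactly the margin left by the calibrated limits.
-/

/-- **Theorem 1 (slack bus part, feasibility via calibration).** If the true solution
satisfies slack limits calibrated by a margin `ξ ≥ (|G|−1)·ε`, then every prediction with
componentwise error at most `ε` on the non-slack generators satisfies the original slack
generation limits. -/
theorem calibrated_slack_ensures_feasibility {G D : Type*} [Fintype G] [DecidableEq G]
    [Fintype D] (s : G) (P_D : D → ℝ) (ε ξ Pmin_s Pmax_s : ℝ) (hε : 0 ≤ ε)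
    (hξ : ((Fintype.card G : ℝ) - 1) * ε ≤ ξ)
    (P : G → ℝ)
    (hP : P s = (∑ d : D, P_D d) - ∑ j ∈ Finset.univ.erase s, P j)
    (hlo : Pmin_s + ξ ≤ P s) (hhi : P s ≤ Pmax_s - ξ) :
    ∀ Phat : G → ℝ,
      Phat s = (∑ d : D, P_D d) - ∑ j ∈ Finset.univ.erase s, Phat j →
      (∀ j : G, j ≠ s → |Phat j - P j| ≤ ε) →
      Pmin_s ≤ Phat s ∧ Phat s ≤ Pmax_s := by
  intro Phat hPhat herr
  have hdev : |Phat s - P s| ≤ ξ := by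
    calc |Phat s - P s| = |∑ j ∈ Finset.univ.erase s, (Phat j - P j)| := by
          rw [hPhat, hP, sub_sub_sub_cancel_left, ← Finset.sum_sub_distrib, ← abs_neg,
            ← Finset.sum_neg_distrib]
          simp only [neg_sub]
      _ ≤ ∑ j ∈ Finset.univ.erase s, |Phat j - P j| := Finset.abs_sum_le_sum_abs _ _
      _ ≤ ∑ _j ∈ Finset.univ.erase s, ε :=
          Finset.sum_le_sum fun j hj => herr j (Finset.ne_of_mem_erase hj)
      _ = ((Fintype.card G : ℝ) - 1) * ε := by
          rw [Finset.sum_const, nsmul_eq_mul,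
            Finset.cast_card_erase_of_mem (Finset.mem_univ s), Finset.card_univ]
      _ ≤ ξ := hξ
  obtain ⟨h1, h2⟩ := abs_le.mp hdev
  exact ⟨by linarith, by linarith⟩
end

section
/- Let B be a finite set of non-slack buses, E a finite set of lines, M a real E×B matrix, G a finite set of generators with a distinguished slack generator s ∈ G, D a finite set of loads with fixed demands P_D : D → ℝ, and ε ≥ 0. Suppose a solution consisting of a non-slack injection vector P : B → ℝ and a generation profile Q : G → ℝ with Q(s) = Σ_{d ∈ D} P_D(d) − Σ_{j ≠ s} Q(j) satisfies the calibrated constraints |(M P)(i)| ≤ Pmax(i) − k_i·ε for all i ∈ E (where k_i = Σ_{k ∈ B} |M(i,k)|) and Pmin_s + (|G|−1)·ε ≤ Q(s) ≤ Pmax_s − (|G|−1)·ε. Then every predicted solution (P̂, Q̂) with |P̂(k) − P(k)| ≤ ε for all k ∈ B, |Q̂(j) − Q(j)| ≤ ε for all j ∈ G with j ≠ s, and Q̂(s) = Σ_{d ∈ D} P_D(d) − Σ_{j ≠ s} Q̂(j), simultaneously satisfies all original constraints: |(M P̂)(i)| ≤ Pmax(i) for all i ∈ E and Pmin_s ≤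 Q̂(s) ≤ Pmax_s. -/
/-! Both constraints are bounds on linear functions of the prediction, so the prediction error
moves them by at most the ℓ¹-norm of the coefficients times `ε`: the row norm `∑ k, |M i k|` for
the flow on line `i`, and `|G| - 1` (the number of non-slack generators, each with coefficient `-1`)
for the slack output. The calibration margins are exactly these amounts. -/

/-- **Theorem 1 (combined universal feasibility).** If the true solution satisfies line
limits calibrated by `kᵢ·ε` and slack limits calibrated by `(|G|−1)·ε`, then every
prediction with componentwise error at most `ε` (and balanced slack output) satisfies all
the original line and slack constraints. -/
theorem calibration_ensures_universal_feasibility {B E G D : Type*}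
    [Fintype B] [Fintype E] [Fintype G] [DecidableEq G] [Fintype D]
    (M : Matrix E B ℝ) (s : G) (P_D : D → ℝ) (ε : ℝ) (hε : 0 ≤ ε)
    (Pmax : E → ℝ) (Pmin_s Pmax_s : ℝ)
    (P : B → ℝ) (Q : G → ℝ)
    (hQ : Q s = (∑ d : D, P_D d) - ∑ j ∈ Finset.univ.erase s, Q j)
    (hline : ∀ i : E, |M.mulVec P i| ≤ Pmax i - (∑ k : B, |M i k|) * ε)
    (hslo : Pmin_s + ((Fintype.card G : ℝ) - 1) * ε ≤ Q s)
    (hshi : Q s ≤ Pmax_s - ((Fintype.card G : ℝ) - 1) * ε) :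
    ∀ (Phat : B → ℝ) (Qhat : G → ℝ),
      (∀ k : B, |Phat k - P k| ≤ ε) →
      (∀ j : G, j ≠ s → |Qhat j - Q j| ≤ ε) →
      Qhat s = (∑ d : D, P_D d) - ∑ j ∈ Finset.univ.erase s, Qhat j →
      (∀ i : E, |M.mulVec Phat i| ≤ Pmax i) ∧
        (Pmin_s ≤ Qhat s ∧ Qhat s ≤ Pmax_s) := by
  intro Phat Qhat hP hG hbal
  refine ⟨fun i => ?_, ?_⟩
  · have hdev : |M.mulVec (Phat - P) i| ≤ (∑ k : B, |M i k|) * ε := by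
      rw [Finset.sum_mul]
      refine (Finset.abs_sum_le_sum_abs _ _).trans (Finset.sum_le_sum fun k _ => ?_)
      rw [abs_mul]
      exact mul_le_mul_of_nonneg_left (hP k) (abs_nonneg _)
    have hsplit : M.mulVec Phat i = M.mulVec P i + M.mulVec (Phat - P) i := by
      rw [Matrix.mulVec_sub, Pi.sub_apply]
      ring
    rw [hsplit]
    linarith [abs_add_le (M.mulVec P i) (M.mulVec (Phat - P) i), hline i]
  · have hcard : ((Finset.univ.erase s).card : ℝ) = (Fintype.card G : ℝ) - 1 := by
      rw [Finset.cast_card_erase_of_mem (Finset.mem_univ s), Finset.card_univ]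
    have hdev : |∑ j ∈ Finset.univ.erase s, (Qhat j - Q j)| ≤ ((Fintype.card G : ℝ) - 1) * ε := by
      rw [← hcard, ← nsmul_eq_mul]
      exact (Finset.abs_sum_le_sum_abs _ _).trans
        (Finset.sum_le_card_nsmul _ _ _ fun j hj => hG j (Finset.ne_of_mem_erase hj))
    rw [Finset.sum_sub_distrib] at hdev
    obtain ⟨h₁, h₂⟩ := abs_le.mp hdev
    constructor <;> linarith
end
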